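/- arXiv:1601.01822 — 3 statements merged into one kernel-verified Lean document; each statement's English description precedes it below -/
import Mathlib

section
/- Let H be a subgroup of SL(2,ℝ) that is unbounded (i.e. the operator norms of its elements are not bounded above). Then H is strongly irreducible if and only if for every nonzero vector x ∈ ℝ², the set of one-dimensional subspaces { span_ℝ{Ax} : A ∈ H } of ℝ² has more than 2 elements. -/
open Matrix

/-- `SL(2,ℝ)`. -/
abbrev SL2R := Matrix.SpecialLinearGroup (Fin 2) ℝ

/-- The Euclidean norm on `ℝ²`. -/
noncomputable def vecNorm2 (v : Fin 2 → ℝ) : ℝ := Real.sqrt (v 0 ^ 2 + v 1 ^ 2)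

/-- The operator norm `‖A‖ = sup_{|x| ≤ 1} |Ax|` of a `2 × 2` real matrix, induced by the
Euclidean norm on `ℝ²`. -/
noncomputable def opNorm2 (A : Matrix (Fin 2) (Fin 2) ℝ) : ℝ :=
  sSup {r | ∃ x : Fin 2 → ℝ, vecNorm2 x ≤ 1 ∧ r = vecNorm2 (A.mulVec x)}

/-- A subgroup `H ≤ SL(2,ℝ)` is strongly irreducible if there is no nonempty finite union `S`
of one-dimensional subspaces of `ℝ²` with `A(S) = S` for every `A ∈ H`. -/
def IsStronglyIrreducible (H : Subgroup SL2R) : Prop :=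
  ¬ ∃ 𝒮 : Finset (Submodule ℝ (Fin 2 → ℝ)), 𝒮.Nonempty ∧
      (∀ W ∈ 𝒮, Module.finrank ℝ W = 1) ∧
      ∀ A ∈ H,
        (fun v => (A : Matrix (Fin 2) (Fin 2) ℝ).mulVec v) ''
            (⋃ W ∈ 𝒮, (W : Set (Fin 2 → ℝ))) =
          ⋃ W ∈ 𝒮, (W : Set (Fin 2 → ℝ))

/-- A subgroup `H ≤ SL(2,ℝ)` is unbounded if the operator norms of its elements are not
bounded above. -/
def IsUnboundedSubgroup (H : Subgroup SL2R) : Prop :=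
  ¬ ∃ C : ℝ, ∀ A ∈ H, opNorm2 (A : Matrix (Fin 2) (Fin 2) ℝ) ≤ C

/-! Strong irreducibility fails exactly when `H` has a finite orbit on the projective line: the
union of the lines in a finite orbit is invariant, and a finite invariant union of lines contains
the orbit of each of its lines. Suppose that some orbit is finite but has at least three points. Its
pointwise stabilizer in `H` consists of maps of the plane with three distinct eigenlines, that is,
of scalars. There are only finitely many scalars of determinant one, and the quotient of `H` by this
stabilizer permutes a finite set, so `H` is finite. An unbounded `H` is infinite; hence each of its
orbits is infinite as soon as it has more than two points. -/

open MulAction Module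
open scoped LinearAlgebra.Projectivization MatrixGroups Pointwise

section InvariantSets

variable {G X : Type*} [Group G] [MulAction G X]

theorem exists_finite_nonempty_smul_eq_self_iff :
    (∃ T : Set X, T.Finite ∧ T.Nonempty ∧ ∀ g : G, g • T = T) ↔ ∃ x : X, (orbit G x).Finite := by
  constructor
  · rintro ⟨T, hfin, ⟨x, hx⟩, hT⟩
    refine ⟨x, hfin.subset ?_⟩
    rintro _ ⟨g, rfl⟩
    exact hT g ▸ Set.smul_mem_smul_set hx
  · rintro ⟨x, hx⟩
    exact ⟨orbit G x, hx, nonempty_orbit x, fun g ↦ smul_orbit g x⟩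

end InvariantSets

section Cone

variable {K V : Type*} [DivisionRing K] [AddCommGroup V] [Module K V]

/-- The affine cone over a set `T` of points of the projective space `ℙ K V`: the union of the
lines of `V` which are the members of `T`. With this convention the cone over `∅` is `∅`,
not `{0}`, so that `T` is determined by its cone. -/
def affineCone (T : Set (ℙ K V)) : Set V :=
  ⋃ p ∈ T, (p.submodule : Set V)

theorem mem_affineCone_iff {T : Set (ℙ K V)} {v : V} (hv : v ≠ 0) :
    v ∈ affineCone T ↔ Projectivization.mk K v hv ∈ T := by
  have mem_submodule_iff (p : ℙ K V) : v ∈ p.submodule ↔ p = Projectivization.mk K v hv := by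
    induction p with
    | h w hw =>
      rw [Projectivization.submodule_mk, Submodule.mem_span_singleton, eq_comm,
        Projectivization.mk_eq_mk_iff']
  simp [affineCone, mem_submodule_iff]

theorem affineCone_injective : Function.Injective (affineCone : Set (ℙ K V) → Set V) := by
  intro S T h
  ext p
  induction p with
  | h v hv => rw [← mem_affineCone_iff hv, h, mem_affineCone_iff hv]

theorem range_projectivization_submodule :
    Set.range (Projectivization.submodule : ℙ K V → Submodule K V) =
      {W : Submodule K V | finrank K W = 1} := by
  ext W
  constructor
  · rintro ⟨p, rfl⟩
    exact p.finrank_submodule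
  · exact fun hW ↦ ⟨Projectivization.mk'' W hW, Projectivization.submodule_mk'' W hW⟩

variable {G : Type*} [Group G] [DistribMulAction G V] [SMulCommClass G K V]

theorem projectivization_submodule_smul (g : G) (p : ℙ K V) :
    (g • p).submodule = g • p.submodule := by
  induction p with
  | h v hv => simp [Submodule.pointwise_smul_def, Submodule.map_span]

theorem smul_affineCone (g : G) (T : Set (ℙ K V)) : g • affineCone T = affineCone (g • T) := by
  simp only [affineCone, Set.smul_set_iUnion₂, ← Submodule.coe_pointwise_smul,
    ← projectivization_submodule_smul]
  rw [← Set.image_smul, Set.biUnion_image]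

theorem exists_finset_lines_smul_eq_self_iff :
    (∃ 𝒮 : Finset (Submodule K V), 𝒮.Nonempty ∧ (∀ W ∈ 𝒮, finrank K W = 1) ∧
        ∀ g : G, g • (⋃ W ∈ 𝒮, (W : Set V)) = ⋃ W ∈ 𝒮, (W : Set V)) ↔
      ∃ p : ℙ K V, (orbit G p).Finite := by
  have biUnion_lines {𝒮 : Finset (Submodule K V)} {T : Set (ℙ K V)}
      (h : Projectivization.submodule '' T = 𝒮) :
      ⋃ W ∈ 𝒮, (W : Set V) = affineCone T := by
    rw [affineCone, ← Set.biUnion_image (g := fun W : Submodule K V ↦ (W : Set V)), h]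
    simp only [Finset.mem_coe]
  rw [← exists_finite_nonempty_smul_eq_self_iff]
  constructor
  · rintro ⟨𝒮, h𝒮, hrank, hinv⟩
    obtain ⟨T, hT⟩ : ∃ T : Set (ℙ K V), Projectivization.submodule '' T = 𝒮 := by
      rwa [← Set.subset_range_iff_exists_image_eq, range_projectivization_submodule]
    refine ⟨T, .of_finite_image (hT ▸ 𝒮.finite_toSet) Projectivization.submodule_injective.injOn,
      Set.image_nonempty.1 (hT.symm ▸ h𝒮.to_set), fun g ↦ affineCone_injective ?_⟩
    rw [← smul_affineCone, ← biUnion_lines hT, hinv]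
  · rintro ⟨T, hfin, hne, hinv⟩
    have hT := (hfin.image Projectivization.submodule).coe_toFinset.symm
    refine ⟨(hfin.image Projectivization.submodule).toFinset, by simpa using hne, ?_, fun g ↦ ?_⟩
    · simp [Projectivization.finrank_submodule]
    · rw [biUnion_lines hT, smul_affineCone, hinv]

theorem encard_setOf_eq_span_smul {v : V} (hv : v ≠ 0) :
    {W : Submodule K V | ∃ g : G, W = K ∙ (g • v)}.encard =
      (orbit G (Projectivization.mk K v hv)).encard := by
  rw [← Projectivization.submodule_injective.encard_image]
  congr 1
  ext W
  simp [orbit, eq_comm]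

end Cone

section ProjectiveLine

variable {K V : Type*} [Field K] [AddCommGroup V] [Module K V]

theorem apply_eq_smul_of_three_eigenvectors (hV : finrank K V = 2) {f : End K V} {u v w : V}
    (huv : LinearIndependent K ![u, v]) (huw : LinearIndependent K ![u, w])
    (hvw : LinearIndependent K ![v, w]) {a b c : K} (hu : f u = a • u) (hv : f v = b • v)
    (hw : f w = c • w) (x : V) : f x = c • x := by
  have : FiniteDimensional K V := .of_finrank_pos (by simp [hV])
  have exists_coord (y : V) : ∃ s t : K, s • u + t • v = y := by
    rw [← Submodule.mem_span_pair, ← Matrix.range_cons_cons_empty,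
      huv.span_eq_top_of_card_eq_finrank' (by simp [hV])]
    exact Submodule.mem_top
  obtain ⟨s, t, rfl⟩ := exists_coord w
  have hs : s ≠ 0 := by
    rintro rfl
    simpa using LinearIndependent.pair_iff.1 hvw t (-1)
  have ht : t ≠ 0 := by
    rintro rfl
    simpa using LinearIndependent.pair_iff.1 huw s (-1)
  obtain ⟨hsac, htbc⟩ : s * (a - c) = 0 ∧ t * (b - c) = 0 := by
    refine LinearIndependent.pair_iff.1 huv _ _ ?_
    rw [map_add, map_smul, map_smul, hu, hv] at hw
    linear_combination (norm := module) hw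
  have hac : a = c := sub_eq_zero.1 ((mul_eq_zero.1 hsac).resolve_left hs)
  have hbc : b = c := sub_eq_zero.1 ((mul_eq_zero.1 htbc).resolve_left ht)
  obtain ⟨k, l, rfl⟩ := exists_coord x
  simp only [map_add, map_smul, hu, hv, hac, hbc, smul_add, smul_comm c]

variable {G : Type*} [Group G] [DistribMulAction G V] [SMulCommClass G K V]

theorem smul_eq_self_iff_exists_eigenvalue (g : G) (p : ℙ K V) :
    g • p = p ↔ ∃ a : K, g • p.rep = a • p.rep := by
  conv_lhs => rw [← p.mk_rep, Projectivization.smul_mk, Projectivization.mk_eq_mk_iff']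
  simp only [eq_comm]

theorem smul_eq_self_of_fixes_three_points (hV : finrank K V = 2) {g : G} {p q r : ℙ K V}
    (hpq : p ≠ q) (hpr : p ≠ r) (hqr : q ≠ r) (hp : g • p = p) (hq : g • q = q)
    (hr : g • r = r) (x : ℙ K V) : g • x = x := by
  rw [smul_eq_self_iff_exists_eigenvalue] at hp hq hr ⊢
  obtain ⟨a, ha⟩ := hp
  obtain ⟨b, hb⟩ := hq
  obtain ⟨c, hc⟩ := hr
  rw [← Projectivization.linearIndependent_pair_iff_ne] at hpq hpr hqr
  exact ⟨c, apply_eq_smul_of_three_eigenvectors hV (f := DistribMulAction.toModuleEnd K V g)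
    hpq hpr hqr ha hb hc x.rep⟩

end ProjectiveLine

section SpecialLinearGroup

theorem finite_center_specialLinearGroup (n R : Type*) [Fintype n] [DecidableEq n] [CommRing R]
    [IsDomain R] :
    (Subgroup.center (Matrix.SpecialLinearGroup n R) :
      Set (Matrix.SpecialLinearGroup n R)).Finite :=
  have : NeZero (max (Fintype.card n) 1) := ⟨by omega⟩
  Finite.of_equiv _ Matrix.SpecialLinearGroup.center_equiv_rootsOfUnity.symm.toEquiv

variable {K : Type*} [Field K]

theorem mem_center_of_fixes_three_points {A : SL(2, K)} {p q r : ℙ K (Fin 2 → K)} (hpq : p ≠ q)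
    (hpr : p ≠ r) (hqr : q ≠ r) (hp : A • p = p) (hq : A • q = q) (hr : A • r = r) :
    A ∈ Subgroup.center SL(2, K) := by
  rw [← Projectivization.SL_mulAction_ker, MonoidHom.mem_ker]
  ext1 x
  exact smul_eq_self_of_fixes_three_points (by simp) hpq hpr hqr hp hq hr x

theorem finite_of_two_lt_encard_orbit {H : Subgroup SL(2, K)} {p : ℙ K (Fin 2 → K)}
    (hfin : (orbit H p).Finite) (hcard : 2 < (orbit H p).encard) : Finite H := by
  have : Finite (orbit H p) := hfin
  obtain ⟨q₁, q₂, q₃, h₁, h₂, h₃, h₁₂, h₁₃, h₂₃⟩ : ∃ q₁ q₂ q₃, q₁ ∈ orbit H p ∧ q₂ ∈ orbit H p ∧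
      q₃ ∈ orbit H p ∧ q₁ ≠ q₂ ∧ q₁ ≠ q₃ ∧ q₂ ≠ q₃ := by
    rw [← hfin.cast_ncard_eq] at hcard
    exact (Set.two_lt_ncard_iff hfin).1 (by exact_mod_cast hcard)
  have ker_le_center : (toPermHom H (orbit H p)).ker ≤ (Subgroup.center SL(2, K)).subgroupOf H := by
    intro A hA
    have fixes (q) (hq : q ∈ orbit H p) : A • q = q :=
      congrArg Subtype.val (Equiv.congr_fun (MonoidHom.mem_ker.1 hA) ⟨q, hq⟩)
    exact mem_center_of_fixes_three_points h₁₂ h₁₃ h₂₃ (fixes _ h₁) (fixes _ h₂) (fixes _ h₃)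
  have finite_ker : Finite (toPermHom H (orbit H p)).ker :=
    ((finite_center_specialLinearGroup (Fin 2) K).preimage
      Subtype.val_injective.injOn).subset ker_le_center
  exact (toPermHom H (orbit H p)).finite_iff_finite_ker_range.2 ⟨finite_ker, inferInstance⟩

theorem infinite_orbit_iff_two_lt_encard (H : Subgroup SL(2, K)) [Infinite H]
    (p : ℙ K (Fin 2 → K)) : (orbit H p).Infinite ↔ 2 < (orbit H p).encard := by
  refine ⟨fun h ↦ h.encard_eq ▸ ENat.natCast_lt_top 2, fun hcard hfin ↦ ?_⟩
  have := finite_of_two_lt_encard_orbit hfin hcard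
  exact not_finite H

end SpecialLinearGroup

theorem IsUnboundedSubgroup.infinite {H : Subgroup SL2R} (hub : IsUnboundedSubgroup H) :
    Infinite H := by
  by_contra hH
  rw [not_infinite_iff_finite] at hH
  obtain ⟨C, hC⟩ := (Set.finite_range fun A : H ↦ opNorm2 (A : SL2R)).bddAbove
  exact hub ⟨C, fun A hA ↦ hC ⟨⟨A, hA⟩, rfl⟩⟩

theorem strong_irreducibility_criterion_general {K : Type*} [Field K] (H : Subgroup SL(2, K))
    [Infinite H] :
    (¬ ∃ 𝒮 : Finset (Submodule K (Fin 2 → K)), 𝒮.Nonempty ∧ (∀ W ∈ 𝒮, finrank K W = 1) ∧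
      ∀ A ∈ H, (fun v => (A : Matrix (Fin 2) (Fin 2) K).mulVec v) ''
        (⋃ W ∈ 𝒮, (W : Set (Fin 2 → K))) = ⋃ W ∈ 𝒮, (W : Set (Fin 2 → K))) ↔
      ∀ x : Fin 2 → K, x ≠ 0 →
        2 < Set.encard {W : Submodule K (Fin 2 → K) |
          ∃ A ∈ H, W = Submodule.span K {(A : Matrix (Fin 2) (Fin 2) K).mulVec x}} := by
  have invariant_iff := exists_finset_lines_smul_eq_self_iff (K := K) (V := Fin 2 → K) (G := H)
  have encard_eq {x : Fin 2 → K} (hx : x ≠ 0) := encard_setOf_eq_span_smul (K := K) (G := H) hx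
  simp only [Subtype.forall, Subtype.exists, exists_prop, Subgroup.mk_smul, ← Set.image_smul,
    Matrix.SpecialLinearGroup.smul_def, Matrix.smul_eq_mulVec] at invariant_iff encard_eq
  rw [invariant_iff, not_exists]
  refine ⟨fun h x hx ↦ ?_, fun h p ↦ ?_⟩
  · exact encard_eq hx ▸ (infinite_orbit_iff_two_lt_encard H _).1 (h _)
  · induction p with
    | h x hx => exact (infinite_orbit_iff_two_lt_encard H _).2 (encard_eq hx ▸ h x hx)

/-- Criterion for strong irreducibility: an unbounded subgroup `H ≤ SL(2,ℝ)` is strongly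
irreducible if and only if, for every nonzero `x ∈ ℝ²`, the orbit
`{span{Ax} : A ∈ H}` in the projective line has more than `2` elements. -/
theorem strong_irreducibility_criterion (H : Subgroup SL2R) (hub : IsUnboundedSubgroup H) :
    IsStronglyIrreducible H ↔
      ∀ x : Fin 2 → ℝ, x ≠ 0 →
        2 < Set.encard {W : Submodule ℝ (Fin 2 → ℝ) |
          ∃ A ∈ H, W = Submodule.span ℝ {(A : Matrix (Fin 2) (Fin 2) ℝ).mulVec x}} := by
  have := hub.infinite
  exact strong_irreducibility_criterion_general H
end

section
/- Let α ≠ 0 and β be real numbers. Then (1/(2π)) ∫₀^{2π} ln( (α·cos θ + β·sin θ)² + α⁻²·sin² θ ) dθ = ln( ((α + 1/α)² + β²) / 4 ). -/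
open Real

/-!
With `z = exp (iθ)`, Euler's formulas give
`p cos θ + q sin θ = z⁻¹ ((p - qi) z² + (p + qi)) / 2`, so the mean of `log |p cos θ + q sin θ|`
is the mean over the unit circle of the logarithm of an affine function of `z²`. Squaring preserves
the normalised measure on the circle, and by Jensen's formula `log |az + b|` has mean
`log (max |a| |b|)`. The theorem is the case `p = α`, `q = β + α⁻¹ i`.
-/

theorem circleAverage_comp_zpow {E : Type*} [NormedAddCommGroup E] [NormedSpace ℝ E]
    {f : ℂ → E} {R : ℝ} {n : ℤ} (hn : n ≠ 0) (hf : CircleIntegrable f 0 (R ^ n)) :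
    circleAverage (fun z ↦ f (z ^ n)) 0 R = circleAverage f 0 (R ^ n) := by
  have hn' : (n : ℝ) ≠ 0 := Int.cast_ne_zero.mpr hn
  set g : ℝ → E := fun θ ↦ f (circleMap 0 (R ^ n) θ)
  have hg : Function.Periodic g (2 * π) := (periodic_circleMap 0 (R ^ n)).comp f
  have hwind : ∫ θ in (0 : ℝ)..n * (2 * π), g θ = n • ∫ θ in (0 : ℝ)..2 * π, g θ := by
    simpa using hg.intervalIntegral_add_zsmul_eq n 0 (hg.intervalIntegrable₀ two_pi_pos.ne' hf)
  calc circleAverage (fun z ↦ f (z ^ n)) 0 R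
      = (2 * π)⁻¹ • ∫ θ in (0 : ℝ)..2 * π, g (n * θ) := by
        simp only [circleAverage_def, circleMap_zero_zpow, g]
    _ = (2 * π)⁻¹ • ∫ θ in (0 : ℝ)..2 * π, g θ := by
        rw [intervalIntegral.integral_comp_mul_left _ hn', mul_zero, hwind,
          ← Int.cast_smul_eq_zsmul ℝ, inv_smul_smul₀ hn']
    _ = circleAverage f 0 (R ^ n) := (circleAverage_def ..).symm

/-- For `a = b = 0` both sides vanish because `Real.log 0 = 0`. -/
theorem circleAverage_log_norm_mul_add (a b : ℂ) :
    circleAverage (fun z ↦ log ‖a * z + b‖) 0 1 = log (max ‖a‖ ‖b‖) := by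
  rcases eq_or_ne a 0 with rfl | ha
  · simp [circleAverage_const]
  · rw [← Polynomial.mahlerMeasure_C_mul_X_add_C ha,
      ← Polynomial.logMahlerMeasure_eq_log_MahlerMeasure, Polynomial.logMahlerMeasure_def]
    simp

theorem circleAverage_log_norm_mul_zpow_add (a b : ℂ) {n : ℤ} (hn : n ≠ 0) :
    circleAverage (fun z ↦ log ‖a * z ^ n + b‖) 0 1 = log (max ‖a‖ ‖b‖) := by
  have hf : CircleIntegrable (fun z ↦ log ‖a * z + b‖) 0 (1 ^ n) :=
    MeromorphicOn.circleIntegrable_log_norm fun _ _ ↦ by fun_prop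
  rw [circleAverage_comp_zpow hn hf, one_zpow, circleAverage_log_norm_mul_add]

theorem norm_mul_cos_add_mul_sin (p q : ℂ) (θ : ℝ) :
    ‖p * cos θ + q * sin θ‖ =
      ‖(p - q * Complex.I) / 2 * circleMap 0 1 θ ^ 2 + (p + q * Complex.I) / 2‖ := by
  have hz : circleMap 0 1 θ = cos θ + sin θ * Complex.I := by
    simp [circleMap_zero, Complex.exp_mul_I]
  have hcs : (sin θ : ℂ) ^ 2 + (cos θ : ℂ) ^ 2 = 1 := by exact_mod_cast sin_sq_add_cos_sq θ
  have hfactor : (p - q * Complex.I) / 2 * circleMap 0 1 θ ^ 2 + (p + q * Complex.I) / 2 =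
      circleMap 0 1 θ * (p * cos θ + q * sin θ) := by
    rw [hz]
    linear_combination -(p + q * Complex.I) / 2 * hcs +
      ((p - q * Complex.I) / 2 * sin θ ^ 2 - q * cos θ * sin θ) * Complex.I_sq
  rw [hfactor, norm_mul, norm_circleMap_zero, abs_one, one_mul]

theorem integral_log_norm_mul_cos_add_mul_sin (p q : ℂ) :
    (2 * π)⁻¹ * ∫ θ in (0 : ℝ)..2 * π, log ‖p * cos θ + q * sin θ‖ =
      log (max ‖p - q * Complex.I‖ ‖p + q * Complex.I‖ / 2) := by
  have hcircle := circleAverage_log_norm_mul_zpow_add ((p - q * Complex.I) / 2)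
    ((p + q * Complex.I) / 2) two_ne_zero
  simp only [zpow_ofNat, circleAverage_def, smul_eq_mul, ← norm_mul_cos_add_mul_sin, norm_div,
    Complex.norm_ofNat] at hcircle
  rw [hcircle, max_div_div_right zero_le_two]

theorem max_sq_add_sq_sub {R : Type*} [CommRing R] [LinearOrder R] [IsStrictOrderedRing R]
    (a b : R) : max ((a + b) ^ 2) ((a - b) ^ 2) = (|a| + |b|) ^ 2 := by
  have hab : (|a| + |b|) ^ 2 = a ^ 2 + b ^ 2 + 2 * |a * b| := by
    rw [add_sq, sq_abs, sq_abs, abs_mul]; ring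
  rw [hab]
  rcases le_total 0 (a * b) with h | h
  · rw [abs_of_nonneg h, max_eq_left (by linear_combination 4 * h)]; ring
  · rw [abs_of_nonpos h, max_eq_right (by linear_combination 4 * h)]; ring

theorem average_log_integral_general (α β γ : ℝ) :
    (1 / (2 * π)) *
        ∫ θ in (0 : ℝ)..(2 * π), log ((α * cos θ + β * sin θ) ^ 2 + γ ^ 2 * sin θ ^ 2) =
      log (((|α| + |γ|) ^ 2 + β ^ 2) / 4) := by
  set q : ℂ := β + γ * Complex.I
  have sq_norm_add_mul_I (x y : ℝ) : ‖x + y * Complex.I‖ ^ 2 = x ^ 2 + y ^ 2 := by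
    rw [Complex.sq_norm, Complex.normSq_add_mul_I]
  have hnorm (θ : ℝ) : (α * cos θ + β * sin θ) ^ 2 + γ ^ 2 * sin θ ^ 2 =
      ‖α * cos θ + q * sin θ‖ ^ 2 := by
    rw [← mul_pow, ← sq_norm_add_mul_I]
    congr 2
    push_cast
    ring
  have hsub : ‖α - q * Complex.I‖ ^ 2 = (α + γ) ^ 2 + β ^ 2 := by
    rw [← neg_sq β, ← sq_norm_add_mul_I]
    congr 2
    push_cast
    linear_combination -γ * Complex.I_sq
  have hadd : ‖α + q * Complex.I‖ ^ 2 = (α - γ) ^ 2 + β ^ 2 := by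
    rw [← sq_norm_add_mul_I]
    congr 2
    push_cast
    linear_combination γ * Complex.I_sq
  have hmax : (max ‖α - q * Complex.I‖ ‖α + q * Complex.I‖ / 2) ^ 2 =
      ((|α| + |γ|) ^ 2 + β ^ 2) / 4 := by
    rw [div_pow, (pow_left_monotoneOn (n := 2)).map_max (norm_nonneg _) (norm_nonneg _), hsub, hadd,
      max_add_add_right, max_sq_add_sq_sub]
    norm_num
  simp only [hnorm, log_pow, intervalIntegral.integral_const_mul]
  rw [← hmax, log_pow, ← integral_log_norm_mul_cos_add_mul_sin]
  ring

/-- For real `α ≠ 0` and `β`,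
`(1/(2π)) ∫₀^{2π} ln((α cos θ + β sin θ)² + α⁻² sin² θ) dθ = ln(((α + 1/α)² + β²)/4)`. -/
theorem average_log_integral (α β : ℝ) (hα : α ≠ 0) :
    (1 / (2 * π)) *
        ∫ θ in (0 : ℝ)..(2 * π),
          Real.log ((α * Real.cos θ + β * Real.sin θ) ^ 2 + α⁻¹ ^ 2 * Real.sin θ ^ 2)
      = Real.log (((α + 1 / α) ^ 2 + β ^ 2) / 4) := by
  have habs : |α + 1 / α| = |α| + |α⁻¹| := by
    rw [one_div, abs_add_eq_add_abs_iff]; simp [le_total]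
  rw [average_log_integral_general, ← habs, sq_abs]
end

section
/- Let σ > 0 and E ∈ ℝ. Then ∫_{−∞}^{∞} e^{−(2/σ)(z³/3 + E·z)} ( ∫_{−∞}^{z} e^{(2/σ)(t³/3 + E·t)} dt ) dz = (σ/2)·√(2π/σ)·∫₀^{∞} u^{−1/2}·e^{−(2/σ)(u³/12 + E·u)} du, all three integrals being finite. -/
open Real MeasureTheory Set

/-!
Substituting `t = z - u` in the inner integral turns the left-hand side into the integral of
`exp ((2 / σ) * (V (z - u) - V z))` over `z ∈ ℝ` and `u > 0`, where `V z = z ^ 3 / 3 + E * z`.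
Because `V` is cubic, `V (z - u) - V z` is quadratic in `z`, with vertex at `z = u / 2`:
it equals `-u * (z - u / 2) ^ 2 - (u ^ 3 / 12 + E * u)`. After exchanging the integrals, the
`z`-integral is Gaussian and contributes the factor `u ^ (-1 / 2)`.
-/

section HalfLine

variable {F : Type*} [NormedAddCommGroup F]

lemma integrableOn_Iic_iff_comp_sub_left {g : ℝ → F} {z : ℝ} :
    IntegrableOn g (Iic z) ↔ IntegrableOn (fun u => g (z - u)) (Ioi 0) := by
  rw [← integrableOn_Ici_iff_integrableOn_Ioi,
    ← (Measure.measurePreserving_sub_left volume z).integrableOn_comp_preimage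
      (MeasurableEquiv.subLeft z).measurableEmbedding, preimage_const_sub_Iic, sub_self]
  rfl

lemma setIntegral_Iic_eq_comp_sub_left [NormedSpace ℝ F] (g : ℝ → F) (z : ℝ) :
    ∫ t in Iic z, g t = ∫ u in Ioi 0, g (z - u) := by
  rw [← integral_Ici_eq_integral_Ioi,
    ← (Measure.measurePreserving_sub_left volume z).setIntegral_preimage_emb
      (MeasurableEquiv.subLeft z).measurableEmbedding, preimage_const_sub_Iic, sub_self]

variable {𝕜 : Type*} [RCLike 𝕜] {f g : ℝ → 𝕜}

lemma mul_setIntegral_Iic_eq (z : ℝ) :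
    f z * ∫ t in Iic z, g t = ∫ u in Ioi 0, f z * g (z - u) := by
  rw [setIntegral_Iic_eq_comp_sub_left, integral_const_mul]

lemma integrable_mul_setIntegral_Iic
    (h : Integrable (fun p : ℝ × ℝ => f p.1 * g (p.1 - p.2))
      (volume.prod (volume.restrict (Ioi 0)))) :
    Integrable (fun z => f z * ∫ t in Iic z, g t) := by
  simpa only [mul_setIntegral_Iic_eq] using h.integral_prod_left

lemma integral_mul_setIntegral_Iic
    (h : Integrable (fun p : ℝ × ℝ => f p.1 * g (p.1 - p.2))
      (volume.prod (volume.restrict (Ioi 0)))) :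
    ∫ z, f z * ∫ t in Iic z, g t = ∫ u in Ioi 0, ∫ z, f z * g (z - u) := by
  simp only [mul_setIntegral_Iic_eq]
  exact integral_integral_swap h

end HalfLine

section CubicExponential

variable {a : ℝ}

lemma exists_sub_le_cubic (ha : 0 < a) (b : ℝ) :
    ∃ K, ∀ u, 0 ≤ u → u - K ≤ a * u ^ 3 + b * u := by
  set m := √(|1 - b| / (3 * a))
  have hm : 3 * a * m ^ 2 = |1 - b| := by
    rw [Real.sq_sqrt (by positivity)]
    field_simp
  refine ⟨2 * a * m ^ 3, fun u hu => ?_⟩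
  -- The graph of `a * u ^ 3` lies above its tangent at `m`, whose slope is `|1 - b|`.
  have tangent : |1 - b| * u - 2 * a * m ^ 3 ≤ a * u ^ 3 := by
    have : 0 ≤ a * ((u - m) ^ 2 * (u + 2 * m)) := by positivity
    linear_combination this - u * hm
  have slope : (1 - b) * u ≤ |1 - b| * u := by
    gcongr
    exact le_abs_self _
  linarith

lemma integrableOn_rpow_mul_exp_neg_cubic {s : ℝ} (hs : -1 < s) (ha : 0 < a) (b : ℝ) :
    IntegrableOn (fun u : ℝ => u ^ s * rexp (-(a * u ^ 3 + b * u))) (Ioi 0) := by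
  obtain ⟨K, hK⟩ := exists_sub_le_cubic ha b
  have gamma : IntegrableOn (fun u : ℝ => u ^ s * rexp (-u)) (Ioi 0) := by
    simpa only [Real.rpow_one] using integrableOn_rpow_mul_exp_neg_rpow hs one_pos
  refine (gamma.const_mul (rexp K)).mono' (by fun_prop) ?_
  filter_upwards [ae_restrict_mem measurableSet_Ioi] with u (hu : 0 < u)
  rw [Real.norm_of_nonneg (by positivity), mul_left_comm, ← Real.exp_add]
  gcongr
  linarith [hK u hu.le]

end CubicExponential

lemma integral_exp_neg_mul_sub_sq (b x : ℝ) :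
    ∫ z, rexp (-b * (z - x) ^ 2) = √(π / b) := by
  rw [integral_sub_right_eq_self (fun z => rexp (-b * z ^ 2)) x, integral_gaussian]

lemma sqrt_div_mul_eq_mul_rpow (x c : ℝ) {u : ℝ} (hu : 0 ≤ u) :
    √(x / (c * u)) = √(x / c) * u ^ (-(1 / 2 : ℝ)) := by
  rw [← div_div, Real.sqrt_div' _ hu, Real.rpow_neg hu, ← Real.sqrt_eq_rpow, div_eq_mul_inv]

/-- The cubic potential of the Riccati drift: the Riccati variable satisfies
`z' = -V' z + noise` with `V z = z ^ 3 / 3 + E * z`, and Halperin's stationary density is built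
from `exp (-(2 / σ) * V z)` and `exp ((2 / σ) * V t)`. -/
noncomputable def riccatiPotential (E z : ℝ) : ℝ := z ^ 3 / 3 + E * z

namespace riccatiPotential

@[fun_prop]
lemma continuous (E : ℝ) : Continuous (riccatiPotential E) := by
  unfold riccatiPotential
  fun_prop

lemma exp_neg_mul_exp_sub (c E z u : ℝ) :
    rexp (-c * riccatiPotential E z) * rexp (c * riccatiPotential E (z - u)) =
      rexp (-(c * u) * (z - u / 2) ^ 2) * rexp (-c * (u ^ 3 / 12 + E * u)) := by
  rw [← Real.exp_add, ← Real.exp_add]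
  congr 1
  unfold riccatiPotential
  ring

variable {c : ℝ}

lemma integrableOn_rpow_mul_exp {s : ℝ} (hs : -1 < s) (hc : 0 < c) (E : ℝ) :
    IntegrableOn (fun u : ℝ => u ^ s * rexp (-c * (u ^ 3 / 12 + E * u))) (Ioi 0) := by
  convert integrableOn_rpow_mul_exp_neg_cubic hs (show 0 < c / 12 by positivity) (c * E)
    using 4
  ring

lemma integrableOn_exp_Iic (hc : 0 < c) (E z : ℝ) :
    IntegrableOn (fun t => rexp (c * riccatiPotential E t)) (Iic z) := by
  rw [integrableOn_Iic_iff_comp_sub_left]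
  have dominating : IntegrableOn (fun u : ℝ => rexp (-c * (u ^ 3 / 12 + E * u))) (Ioi 0) := by
    simpa only [Real.rpow_zero, one_mul] using integrableOn_rpow_mul_exp neg_one_lt_zero hc E
  refine (dominating.const_mul (rexp (c * riccatiPotential E z))).mono' (by fun_prop) ?_
  filter_upwards [ae_restrict_mem measurableSet_Ioi] with u (hu : 0 < u)
  have gaussian_le_one : rexp (-(c * u) * (z - u / 2) ^ 2) ≤ 1 := by
    rw [Real.exp_le_one_iff, neg_mul, neg_nonpos]
    positivity
  calc ‖rexp (c * riccatiPotential E (z - u))‖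
      = rexp (c * riccatiPotential E z) *
          (rexp (-c * riccatiPotential E z) * rexp (c * riccatiPotential E (z - u))) := by
        rw [Real.norm_of_nonneg (by positivity), neg_mul, Real.exp_neg,
          mul_inv_cancel_left₀ (Real.exp_ne_zero _)]
    _ ≤ rexp (c * riccatiPotential E z) * rexp (-c * (u ^ 3 / 12 + E * u)) := by
        rw [exp_neg_mul_exp_sub]
        gcongr
        exact mul_le_of_le_one_left (by positivity) gaussian_le_one

lemma integrable_exp_neg_mul_exp_sub (hc : 0 < c) (E : ℝ) {u : ℝ} (hu : 0 < u) :
    Integrable fun z =>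
      rexp (-c * riccatiPotential E z) * rexp (c * riccatiPotential E (z - u)) := by
  simp only [exp_neg_mul_exp_sub]
  exact ((integrable_exp_neg_mul_sq (mul_pos hc hu)).comp_sub_right (u / 2)).mul_const _

lemma integral_exp_neg_mul_exp_sub (c E : ℝ) {u : ℝ} (hu : 0 ≤ u) :
    ∫ z, rexp (-c * riccatiPotential E z) * rexp (c * riccatiPotential E (z - u)) =
      √(π / c) * (u ^ (-(1 / 2 : ℝ)) * rexp (-c * (u ^ 3 / 12 + E * u))) := by
  simp only [exp_neg_mul_exp_sub]
  rw [integral_mul_const, integral_exp_neg_mul_sub_sq, sqrt_div_mul_eq_mul_rpow π c hu, mul_assoc]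

lemma integrable_prod_exp_neg_mul_exp_sub (hc : 0 < c) (E : ℝ) :
    Integrable (fun p : ℝ × ℝ =>
      rexp (-c * riccatiPotential E p.1) * rexp (c * riccatiPotential E (p.1 - p.2)))
      (volume.prod (volume.restrict (Ioi 0))) := by
  rw [integrable_prod_iff' (by fun_prop)]
  constructor
  · filter_upwards [ae_restrict_mem measurableSet_Ioi] with u hu
    exact integrable_exp_neg_mul_exp_sub hc E hu
  · have marginal := (integrableOn_rpow_mul_exp (s := -(1 / 2)) (by norm_num) hc E).const_mul
      √(π / c)
    refine IntegrableOn.congr_fun marginal (fun u (hu : 0 < u) => ?_) measurableSet_Ioi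
    simp only [norm_mul, Real.norm_eq_abs, Real.abs_exp]
    exact (integral_exp_neg_mul_exp_sub c E hu.le).symm

lemma integral_exp_neg_mul_setIntegral_exp (hc : 0 < c) (E : ℝ) :
    ∫ z, rexp (-c * riccatiPotential E z) * ∫ t in Iic z, rexp (c * riccatiPotential E t) =
      √(π / c) * ∫ u in Ioi 0, u ^ (-(1 / 2 : ℝ)) * rexp (-c * (u ^ 3 / 12 + E * u)) := by
  rw [integral_mul_setIntegral_Iic (integrable_prod_exp_neg_mul_exp_sub hc E),
    ← integral_const_mul]
  exact setIntegral_congr_fun measurableSet_Ioi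
    fun u (hu : 0 < u) => integral_exp_neg_mul_exp_sub c E hu.le

end riccatiPotential

/-- Normalisation of Halperin's stationary Riccati density for the white-noise potential:
`∫_{−∞}^{∞} e^{−(2/σ)(z³/3+Ez)} (∫_{−∞}^{z} e^{(2/σ)(t³/3+Et)} dt) dz
  = (σ/2)·√(2π/σ)·∫₀^{∞} u^{−1/2} e^{−(2/σ)(u³/12+Eu)} du`, all three integrals being finite. -/
theorem halperin_normalisation (σ E : ℝ) (hσ : 0 < σ) :
    (∀ z : ℝ, IntegrableOn (fun t => Real.exp ((2 / σ) * (t ^ 3 / 3 + E * t))) (Iic z) volume) ∧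
    Integrable (fun z =>
      Real.exp (-(2 / σ) * (z ^ 3 / 3 + E * z)) *
        ∫ t in Iic z, Real.exp ((2 / σ) * (t ^ 3 / 3 + E * t))) volume ∧
    IntegrableOn (fun u : ℝ =>
      u ^ (-(1 / 2 : ℝ)) * Real.exp (-(2 / σ) * (u ^ 3 / 12 + E * u))) (Ioi 0) volume ∧
    (∫ z : ℝ, Real.exp (-(2 / σ) * (z ^ 3 / 3 + E * z)) *
        ∫ t in Iic z, Real.exp ((2 / σ) * (t ^ 3 / 3 + E * t))) =
      (σ / 2) * Real.sqrt (2 * π / σ) *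
        ∫ u in Ioi (0 : ℝ), u ^ (-(1 / 2 : ℝ)) * Real.exp (-(2 / σ) * (u ^ 3 / 12 + E * u)) := by
  have hc : 0 < 2 / σ := by positivity
  have prefactor : √(π / (2 / σ)) = σ / 2 * √(2 * π / σ) := by
    rw [show π / (2 / σ) = (σ / 2) ^ 2 * (2 * π / σ) by field_simp,
      Real.sqrt_mul (by positivity), Real.sqrt_sq (by positivity)]
  refine ⟨riccatiPotential.integrableOn_exp_Iic hc E,
    integrable_mul_setIntegral_Iic (riccatiPotential.integrable_prod_exp_neg_mul_exp_sub hc E),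
    riccatiPotential.integrableOn_rpow_mul_exp (by norm_num) hc E, ?_⟩
  rw [← prefactor]
  exact riccatiPotential.integral_exp_neg_mul_setIntegral_exp hc E
end
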